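/- There exists a universal constant C > 0 such that the following holds. Let Λ be a finite nonempty set, k ≥ 1, γ ∈ (0, 1/2], and α₁,…,α_k real numbers. Suppose for every y ∈ {0,1}^k there is a probability distribution μ_y : Λ → [0,1] (with Σ_λ μ_y(λ) = 1), and there are functions f₁,…,f_k : Λ → [0,1] such that for all y ∈ {0,1}^k and i ∈ {1,…,k}: if y_i = 1 then Σ_{λ∈Λ} μ_y(λ)·f_i(λ) ≥ α_i + γ, and if y_i = 0 then Σ_{λ∈Λ} μ_y(λ)·f_i(λ) ≤ α_i − γ. Then k ≤ C·log₂|Λ| / γ². -/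

import Mathlib

/-!
Sum the margins of all `y` with signs: for uniformly random `y` the thresholds contribute zero on
average, so they may be replaced by the midpoint of the range of `f`, and the average of
`Σ_λ μ_y(λ) Σ_i ±(f_i(λ) - midpoint)` is still at least `kγ`. A distribution `μ_y` chosen after
seeing `y` does no better than the best of `|Λ|` fixed Rademacher sums, so by Massart's finite class
argument (Jensen for `exp`, then bounding a maximum over `Λ` by the sum) this average is at most
`√(k log|Λ| / 2)` when `f` takes values in `[0, 1]`.
-/

open Real
open scoped BigOperators

section Jensen

variable {Y Λ : Type*} [Fintype Y] [Fintype Λ]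

lemma exp_expect_le [Nonempty Y] (x : Y → ℝ) : exp (𝔼 y, x y) ≤ 𝔼 y, exp (x y) := by
  have jensen := convexOn_exp.map_sum_le (t := Finset.univ)
    (w := fun _ : Y ↦ (Fintype.card Y : ℝ)⁻¹) (p := x)
    (fun _ _ ↦ by positivity) (by simp) (fun _ _ ↦ Set.mem_univ _)
  simpa only [Fintype.expect_eq_sum_div_card, div_eq_inv_mul, Finset.mul_sum, smul_eq_mul]
    using jensen

lemma exp_sum_mul_le_sum_exp {w : Λ → ℝ} (hw : w ∈ stdSimplex ℝ Λ) (z : Λ → ℝ) :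
    exp (∑ l, w l * z l) ≤ ∑ l, exp (z l) :=
  calc exp (∑ l, w l * z l) ≤ ∑ l, w l * exp (z l) := by
        simpa only [smul_eq_mul] using
          convexOn_exp.map_sum_le (fun l _ ↦ hw.1 l) hw.2 (fun l _ ↦ Set.mem_univ (z l))
    _ ≤ ∑ l, exp (z l) := Finset.sum_le_sum fun l _ ↦
        mul_le_of_le_one_left (exp_pos _).le (mem_Icc_of_mem_stdSimplex hw l).2

lemma exp_expect_sum_mul_le_sum_expect_exp [Nonempty Y] {μ : Y → Λ → ℝ}
    (hμ : ∀ y, μ y ∈ stdSimplex ℝ Λ) (z : Y → Λ → ℝ) :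
    exp (𝔼 y, ∑ l, μ y l * z y l) ≤ ∑ l, 𝔼 y, exp (z y l) :=
  calc exp (𝔼 y, ∑ l, μ y l * z y l) ≤ 𝔼 y, exp (∑ l, μ y l * z y l) := exp_expect_le _
    _ ≤ 𝔼 y, ∑ l, exp (z y l) :=
        Finset.expect_le_expect fun y _ ↦ exp_sum_mul_le_sum_exp (hμ y) (z y)
    _ = ∑ l, 𝔼 y, exp (z y l) := Finset.expect_sum_comm _ _ _

end Jensen

lemma expect_pi_prod {ι K : Type*} [Fintype ι] [DecidableEq ι] [Semifield K] [CharZero K]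
    {κ : ι → Type*} [∀ i, Fintype (κ i)] (g : ∀ i, κ i → K) :
    𝔼 y : ∀ i, κ i, ∏ i, g i (y i) = ∏ i, 𝔼 b, g i b := by
  simp only [Fintype.expect_eq_sum_div_card, Finset.prod_div_distrib, Fintype.prod_sum,
    Fintype.card_pi, Nat.cast_prod]

lemma sum_mul_sum_mul_sub_eq {ι Λ K : Type*} [Fintype ι] [Fintype Λ] [CommRing K] {w : Λ → K}
    (hw : ∑ l, w l = 1) (s c : ι → K) (f : ι → Λ → K) :
    ∑ l, w l * ∑ i, s i * (f i l - c i) = ∑ i, s i * (∑ l, w l * f i l - c i) := by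
  simp only [Finset.mul_sum, mul_left_comm (w _)]
  rw [Finset.sum_comm]
  simp only [← Finset.mul_sum, mul_sub, Finset.sum_sub_distrib, ← Finset.sum_mul, hw, one_mul]

/-- The Rademacher sign `±1` of a bit. For uniformly random `y : ι → Bool`, the numbers
`rademacherSign (y i)` are independent Rademacher variables. -/
def rademacherSign (b : Bool) : ℝ := if b then 1 else -1

section Rademacher

variable {ι Λ : Type*} [Fintype ι] [DecidableEq ι] [Fintype Λ]

lemma rademacherSign_not (b : Bool) : rademacherSign (!b) = -rademacherSign b := by
  cases b <;> simp [rademacherSign]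

lemma expect_exp_rademacherSign_mul (x : ℝ) : 𝔼 b, exp (rademacherSign b * x) = cosh x := by
  rw [Fintype.expect_eq_sum_div_card]
  simp [rademacherSign, cosh_eq]

lemma expect_sum_rademacherSign_mul_eq_zero (c : ι → ℝ) :
    𝔼 y : ι → Bool, ∑ i, rademacherSign (y i) * c i = 0 := by
  have flip : 𝔼 y : ι → Bool, ∑ i, rademacherSign (y i) * c i =
      𝔼 y : ι → Bool, -∑ i, rademacherSign (y i) * c i :=
    Fintype.expect_equiv (Equiv.piCongrRight fun _ ↦ Equiv.boolNot) _ _ fun y ↦ by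
      simp [rademacherSign_not]
  rw [Finset.expect_neg_distrib] at flip
  linarith

lemma expect_exp_sum_rademacherSign_mul_le (v : ι → ℝ) :
    𝔼 y : ι → Bool, exp (∑ i, rademacherSign (y i) * v i) ≤ exp ((∑ i, v i ^ 2) / 2) :=
  calc 𝔼 y : ι → Bool, exp (∑ i, rademacherSign (y i) * v i) = ∏ i, cosh (v i) := by
        simp only [exp_sum, expect_pi_prod fun i b ↦ exp (rademacherSign b * v i),
          expect_exp_rademacherSign_mul]
    _ ≤ ∏ i, exp (v i ^ 2 / 2) :=
        Finset.prod_le_prod (fun i _ ↦ (cosh_pos _).le) fun i _ ↦ cosh_le_exp_half_sq _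
    _ = exp ((∑ i, v i ^ 2) / 2) := by rw [← exp_sum, Finset.sum_div]

lemma expect_sum_rademacherSign_le_log_card_add {μ : (ι → Bool) → Λ → ℝ}
    (hμ : ∀ y, μ y ∈ stdSimplex ℝ Λ) {v : Λ → ι → ℝ} {R : ℝ} (hv : ∀ l, ∑ i, v l i ^ 2 ≤ R) :
    𝔼 y, ∑ l, μ y l * ∑ i, rademacherSign (y i) * v l i ≤ log (Fintype.card Λ) + R / 2 := by
  have exp_le : exp (𝔼 y, ∑ l, μ y l * ∑ i, rademacherSign (y i) * v l i) ≤
      Fintype.card Λ * exp (R / 2) :=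
    calc _ ≤ ∑ l, 𝔼 y : ι → Bool, exp (∑ i, rademacherSign (y i) * v l i) :=
          exp_expect_sum_mul_le_sum_expect_exp hμ _
      _ ≤ ∑ _l : Λ, exp (R / 2) := Finset.sum_le_sum fun l _ ↦
          (expect_exp_sum_rademacherSign_mul_le (v l)).trans (by gcongr; exact hv l)
      _ = Fintype.card Λ * exp (R / 2) := by simp
  rw [← div_le_iff₀ (exp_pos _), ← exp_sub] at exp_le
  have sub_le_log := (le_log_iff_exp_le ((exp_pos _).trans_le exp_le)).2 exp_le
  linarith

/-- **Massart's finite class lemma**, with an arbitrary `y`-dependent average over `Λ` in place of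
the maximum. -/
lemma sq_expect_sum_rademacherSign_le {μ : (ι → Bool) → Λ → ℝ}
    (hμ : ∀ y, μ y ∈ stdSimplex ℝ Λ) {v : Λ → ι → ℝ} {R : ℝ} (hv : ∀ l, ∑ i, v l i ^ 2 ≤ R) :
    (𝔼 y, ∑ l, μ y l * ∑ i, rademacherSign (y i) * v l i) ^ 2 ≤ 2 * R * log (Fintype.card Λ) := by
  set X := 𝔼 y, ∑ l, μ y l * ∑ i, rademacherSign (y i) * v l i with hX
  have scaled (t : ℝ) : t * X ≤ log (Fintype.card Λ) + t ^ 2 * R / 2 := by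
    have htv (l : Λ) : ∑ i, (t * v l i) ^ 2 ≤ t ^ 2 * R := by
      simp only [mul_pow, ← Finset.mul_sum]
      exact mul_le_mul_of_nonneg_left (hv l) (sq_nonneg t)
    simpa only [hX, mul_left_comm _ t, ← Finset.mul_sum, ← Finset.mul_expect]
      using expect_sum_rademacherSign_le_log_card_add hμ htv
  -- Optimizing over `t` amounts to a nonpositive discriminant.
  have discrim_nonpos : discrim (R / 2) (-X) (log (Fintype.card Λ)) ≤ 0 :=
    discrim_le_zero fun t ↦ by linarith [scaled t]
  rw [discrim] at discrim_nonpos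
  linarith

lemma card_mul_le_expect_sum_rademacherSign_mul_sub {p : (ι → Bool) → ι → ℝ} {α : ι → ℝ} {γ : ℝ}
    (h_true : ∀ y i, y i = true → α i + γ ≤ p y i)
    (h_false : ∀ y i, y i = false → p y i ≤ α i - γ) (c : ι → ℝ) :
    Fintype.card ι * γ ≤ 𝔼 y, ∑ i, rademacherSign (y i) * (p y i - c i) := by
  have margin (y : ι → Bool) (i : ι) : γ ≤ rademacherSign (y i) * (p y i - α i) := by
    cases hy : y i
    · simp only [rademacherSign, Bool.false_eq_true, if_false]
      linarith [h_false y i hy]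
    · simp only [rademacherSign, if_true]
      linarith [h_true y i hy]
  calc Fintype.card ι * γ ≤ 𝔼 y : ι → Bool, ∑ i, rademacherSign (y i) * (p y i - α i) :=
        Finset.le_expect Finset.univ_nonempty fun y _ ↦ by
          simpa using Finset.card_nsmul_le_sum Finset.univ _ γ fun i _ ↦ margin y i
    _ = 𝔼 y, ∑ i, rademacherSign (y i) * (p y i - c i) := by
        simp only [mul_sub, Finset.sum_sub_distrib, Finset.expect_sub_distrib,
          expect_sum_rademacherSign_mul_eq_zero]

end Rademacher

theorem fat_shattering_lemma_EOM_general {ι Λ : Type*} [Fintype ι] [Fintype Λ] {a b γ : ℝ}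
    (hγ : 0 < γ) {α : ι → ℝ} {μ : (ι → Bool) → Λ → ℝ} (hμ : ∀ y, μ y ∈ stdSimplex ℝ Λ)
    {f : ι → Λ → ℝ} (hf : ∀ i l, f i l ∈ Set.Icc a b)
    (h_true : ∀ y i, y i = true → α i + γ ≤ ∑ l, μ y l * f i l)
    (h_false : ∀ y i, y i = false → ∑ l, μ y l * f i l ≤ α i - γ) :
    (Fintype.card ι : ℝ) ≤ (b - a) ^ 2 / 2 * log (Fintype.card Λ) / γ ^ 2 := by
  classical
  obtain hι | hι := (Nat.cast_nonneg (α := ℝ) (Fintype.card ι)).eq_or_lt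
  · rw [← hι]
    exact div_nonneg (mul_nonneg (by positivity) (log_natCast_nonneg _)) (sq_nonneg γ)
  set mid := (a + b) / 2 with mid_eq
  have lower := card_mul_le_expect_sum_rademacherSign_mul_sub h_true h_false fun _ ↦ mid
  have radius (l : Λ) : ∑ i, (f i l - mid) ^ 2 ≤ Fintype.card ι * ((b - a) / 2) ^ 2 := by
    simpa using Finset.sum_le_card_nsmul Finset.univ _ (((b - a) / 2) ^ 2) fun i _ ↦
      sq_le_sq' (by linarith [(hf i l).1]) (by linarith [(hf i l).2])
  have upper := sq_expect_sum_rademacherSign_le hμ radius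
  simp only [sum_mul_sum_mul_sub_eq (hμ _).2 _ fun _ ↦ mid] at upper
  have key : (Fintype.card ι * γ) ^ 2 ≤
      2 * (Fintype.card ι * ((b - a) / 2) ^ 2) * log (Fintype.card Λ) :=
    (pow_le_pow_left₀ (by positivity) lower 2).trans upper
  rw [le_div_iff₀ (by positivity)]
  exact le_of_mul_le_mul_left (by linarith) hι

/-- **Fat-shattering lemma for preparations of efficient ontological models** (analogue of
Aaronson's Theorem 2.6).  There is a universal constant `C > 0` such that: whenever `Λ` is
a finite nonempty ontic state space, `k ≥ 1`, `γ ∈ (0, 1/2]`, `α₁,…,α_k` are reals, and for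
every `y ∈ {0,1}^k` there is a probability distribution `μ_y` on `Λ` together with
outcome-probability functions `f₁,…,f_k : Λ → [0,1]` such that for all `y` and `i`:
if `y_i = 1` then `Σ_λ μ_y(λ)·f_i(λ) ≥ α_i + γ`, and if `y_i = 0` then
`Σ_λ μ_y(λ)·f_i(λ) ≤ α_i − γ`, then `k ≤ C·log₂|Λ|/γ²`. -/
theorem fat_shattering_lemma_EOM :
    ∃ C : ℝ, 0 < C ∧
      ∀ (Λ : Type) (_ : Fintype Λ), Nonempty Λ →
      ∀ (k : ℕ), 1 ≤ k →
      ∀ γ : ℝ, γ ∈ Set.Ioc (0 : ℝ) (1 / 2) →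
      ∀ α : Fin k → ℝ,
      ∀ μ : (Fin k → Bool) → Λ → ℝ,
        (∀ (y : Fin k → Bool) (l : Λ), 0 ≤ μ y l) →
        (∀ y : Fin k → Bool, ∑ l : Λ, μ y l = 1) →
      ∀ f : Fin k → Λ → ℝ,
        (∀ (i : Fin k) (l : Λ), f i l ∈ Set.Icc (0 : ℝ) 1) →
        (∀ (y : Fin k → Bool) (i : Fin k), y i = true → α i + γ ≤ ∑ l : Λ, μ y l * f i l) →
        (∀ (y : Fin k → Bool) (i : Fin k), y i = false → ∑ l : Λ, μ y l * f i l ≤ α i - γ) →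
        (k : ℝ) ≤ C * Real.logb 2 (Fintype.card Λ) / γ ^ 2 := by
  refine ⟨log 2 / 2, by positivity, fun Λ _ _ k _ γ hγ α μ hμ₀ hμ₁ f hf h_true h_false ↦ ?_⟩
  simpa [field, logb] using
    fat_shattering_lemma_EOM_general hγ.1 (fun y ↦ ⟨hμ₀ y, hμ₁ y⟩) hf h_true h_false
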